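/- Let b > 0, let q : ℝ → ℂ be continuous on [−b,b], let f solve f'' − q f = 0 on [−b,b] with f(0) = 1, f'(0) = 0, and assume f(x) ≠ 0 on [−b,b]. For ω ∈ ℝ let u(ω,·) be the solution of y'' − q(x)y = −ω² y on [−b,b] with y(0) = 1, y'(0) = iω. Then for every ω ∈ ℝ and every x ∈ [−b,b], the series Σ_{n=0}^{∞} c_n(x)(iω)ⁿ converges and u(ω,x) = e^{iωx} + √π · e^{−ω²/4} · Σ_{n=0}^{∞} c_n(x)(iω)ⁿ, where c_n(x) = (1/(√π n! 2ⁿ)) Σ_{k=0}^{n} h_{k,n} (φ_k(x) − x^k). -/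

import Mathlib

open MeasureTheory Set Filter Finset Complex Topology

noncomputable section

/-- The iterated integrals X⁽ⁿ⁾: X⁽⁰⁾ ≡ 1, X⁽ⁿ⁾(x) = n ∫₀ˣ X⁽ⁿ⁻¹⁾(s) (f(s)²)^((−1)ⁿ) ds. -/
def formalX (f : ℝ → ℂ) : ℕ → ℝ → ℂ
  | 0 => fun _ => 1
  | n + 1 => fun x =>
      (n + 1 : ℂ) * ∫ s in (0:ℝ)..x, formalX f n s * ((f s) ^ 2) ^ ((-1 : ℤ) ^ (n + 1))

/-- The iterated integrals X̃⁽ⁿ⁾: X̃⁽⁰⁾ ≡ 1, X̃⁽ⁿ⁾(x) = n ∫₀ˣ X̃⁽ⁿ⁻¹⁾(s) (f(s)²)^((−1)^(n−1)) ds. -/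
def formalXt (f : ℝ → ℂ) : ℕ → ℝ → ℂ
  | 0 => fun _ => 1
  | n + 1 => fun x =>
      (n + 1 : ℂ) * ∫ s in (0:ℝ)..x, formalXt f n s * ((f s) ^ 2) ^ ((-1 : ℤ) ^ n)

/-- The formal powers φₖ: φₖ = f·X⁽ᵏ⁾ for odd k, φₖ = f·X̃⁽ᵏ⁾ for even k. -/
def formalPower (f : ℝ → ℂ) (k : ℕ) (x : ℝ) : ℂ :=
  if Odd k then f x * formalX f k x else f x * formalXt f k x

/-- The physicists' Hermite polynomials: H₀ = 1, Hₙ₊₁ = 2x·Hₙ − Hₙ'. -/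
def hermitePhys : ℕ → Polynomial ℝ
  | 0 => 1
  | n + 1 => 2 * Polynomial.X * hermitePhys n - Polynomial.derivative (hermitePhys n)

/-- cₙ(x) = (1/(√π n! 2ⁿ)) Σₖ h_{k,n} (φₖ(x) − xᵏ), h_{k,n} the coefficient of yᵏ in Hₙ. -/
def cCoef (f : ℝ → ℂ) (n : ℕ) (x : ℝ) : ℂ :=
  (1 / ((Real.sqrt Real.pi : ℂ) * n.factorial * 2 ^ n)) *
    ∑ k ∈ Finset.range (n + 1), ((hermitePhys n).coeff k : ℂ) * (formalPower f k x - (x : ℂ) ^ k)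

/-!
Liouville's substitution `v = y / f` turns `y'' = q y + μ² y` (with `μ = iω`) into the coupled
Volterra system `v = 1 + μ ∫ f⁻² w`, `w = 1 + μ ∫ f² v`, where `μ w` is the Wronskian of `f` and `y`.
Its Neumann series consists of nested integrals with weights alternating between `f⁻²` and `f²`,
which are the formal powers up to factorials: `y = ∑ μᵏ φₖ / k!`, the spectral parameter power
series. Subtracting the series of `exp (μ x)` and taking the Cauchy product with
`exp (-(μ/2)²) = ∑ Hⱼ(0) (μ/2)ʲ / j!` produces the Hermite coefficients, because the coefficient of
`yᵏ` in `Hₙ` is `(n choose k) 2ᵏ Hₙ₋ₖ(0)`; finally `exp (-ω²/4) exp (-(μ/2)²) = 1`.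
-/

section Volterra

variable {𝕜 : Type*} [RCLike 𝕜] {a b : ℝ} {p r g h v w : ℝ → 𝕜}

/-- The `n`-th term of the Neumann series of the coupled Volterra system `v = g + ∫ₐ p w`,
`w = h + ∫ₐ r v`, in the component `v`; the `n` nested integrals from `a` carry the weights
`p, r, p, …`, the outermost one being `p`. -/
def volterraIter (a : ℝ) : (p r g h : ℝ → 𝕜) → ℕ → ℝ → 𝕜
  | _, _, g, _, 0 => g
  | p, r, g, h, n + 1 => fun x => ∫ t in a..x, p t * volterraIter a r p h g n t

lemma continuousOn_intervalPrimitive (hg : ContinuousOn g (uIcc a b)) :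
    ContinuousOn (fun x => ∫ t in a..x, g t) (uIcc a b) :=
  intervalIntegral.continuousOn_primitive_interval' hg.intervalIntegrable left_mem_uIcc

lemma continuousOn_volterraIter (hp : ContinuousOn p (uIcc a b)) (hr : ContinuousOn r (uIcc a b))
    (hg : ContinuousOn g (uIcc a b)) (hh : ContinuousOn h (uIcc a b)) (n : ℕ) :
    ContinuousOn (volterraIter a p r g h n) (uIcc a b) := by
  induction n generalizing p r g h with
  | zero => exact hg
  | succ n ih => exact continuousOn_intervalPrimitive (hp.mul (ih hr hp hh hg))

lemma norm_integral_le_of_norm_le_mul_abs_sub_pow {c : ℝ} {n : ℕ}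
    (hg : ∀ t ∈ uIcc a b, ‖g t‖ ≤ c * |t - a| ^ n) :
    ‖∫ t in a..b, g t‖ ≤ c * (|b - a| ^ (n + 1) / (n + 1)) := by
  rw [← integral_pow_abs_sub_uIoc, ← integral_const_mul, intervalIntegral.norm_intervalIntegral_eq]
  have hcont : Continuous fun t => c * |t - a| ^ n := by fun_prop
  refine norm_integral_le_of_norm_le (hcont.intervalIntegrable a b).def' ?_
  exact (ae_restrict_iff' measurableSet_uIoc).2 (.of_forall fun t ht => hg t (uIoc_subset_uIcc ht))

lemma norm_volterraIter_le {K M : ℝ} (hp : ∀ t ∈ uIcc a b, ‖p t‖ ≤ M)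
    (hr : ∀ t ∈ uIcc a b, ‖r t‖ ≤ M) (hg : ∀ t ∈ uIcc a b, ‖g t‖ ≤ K)
    (hh : ∀ t ∈ uIcc a b, ‖h t‖ ≤ K) (n : ℕ) {x : ℝ} (hx : x ∈ uIcc a b) :
    ‖volterraIter a p r g h n x‖ ≤ K * M ^ n / n.factorial * |x - a| ^ n := by
  induction n generalizing p r g h x with
  | zero => simpa [volterraIter] using hg x hx
  | succ n ih =>
    have hM : 0 ≤ M := (norm_nonneg _).trans (hp a left_mem_uIcc)
    have hbound : ∀ t ∈ uIcc a x, ‖p t * volterraIter a r p h g n t‖ ≤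
        M * (K * M ^ n / n.factorial) * |t - a| ^ n := fun t ht => by
      have ht' := uIcc_subset_uIcc_left hx ht
      rw [norm_mul, mul_assoc]
      exact mul_le_mul (hp t ht') (ih hr hp hh hg ht') (norm_nonneg _) hM
    refine (norm_integral_le_of_norm_le_mul_abs_sub_pow hbound).trans_eq ?_
    rw [Nat.factorial_succ]
    push_cast
    field_simp
    ring

lemma eq_sum_volterraIter_add_volterraIter
    (hp : ContinuousOn p (uIcc a b)) (hr : ContinuousOn r (uIcc a b))
    (hg : ContinuousOn g (uIcc a b)) (hh : ContinuousOn h (uIcc a b))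
    (hvc : ContinuousOn v (uIcc a b)) (hwc : ContinuousOn w (uIcc a b))
    (hv : ∀ x ∈ uIcc a b, v x = g x + ∫ t in a..x, p t * w t)
    (hw : ∀ x ∈ uIcc a b, w x = h x + ∫ t in a..x, r t * v t) (N : ℕ) {x : ℝ}
    (hx : x ∈ uIcc a b) :
    v x = ∑ k ∈ Finset.range N, volterraIter a p r g h k x + volterraIter a p r v w N x := by
  induction N generalizing p r g h v w x with
  | zero => simp [volterraIter]
  | succ N ih =>
    have hsub : uIcc a x ⊆ uIcc a b := uIcc_subset_uIcc_left hx
    have hterm (k : ℕ) :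
        IntervalIntegrable (fun t => p t * volterraIter a r p h g k t) volume a x :=
      ((hp.mul (continuousOn_volterraIter hr hp hh hg k)).mono hsub).intervalIntegrable
    have hrem : IntervalIntegrable (fun t => p t * volterraIter a r p w v N t) volume a x :=
      ((hp.mul (continuousOn_volterraIter hr hp hwc hvc N)).mono hsub).intervalIntegrable
    have hsum : IntervalIntegrable
        (fun t => ∑ k ∈ Finset.range N, p t * volterraIter a r p h g k t) volume a x := by
      simpa only [Finset.sum_fn] using IntervalIntegrable.sum _ fun k _ => hterm k
    have hint : ∫ t in a..x, p t * w t =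
        ∑ k ∈ Finset.range N, volterraIter a p r g h (k + 1) x +
          volterraIter a p r v w (N + 1) x := calc
      _ = ∫ t in a..x, (∑ k ∈ Finset.range N, p t * volterraIter a r p h g k t +
            p t * volterraIter a r p w v N t) :=
        intervalIntegral.integral_congr fun t ht => by
          simp only [ih hr hp hh hg hwc hvc hw hv (hsub ht), mul_add, Finset.mul_sum]
      _ = _ := by
        rw [intervalIntegral.integral_add hsum hrem,
          intervalIntegral.integral_finsetSum fun k _ => hterm k]
        rfl
    rw [hv x hx, hint, Finset.sum_range_succ']
    simp only [volterraIter]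
    ring

theorem hasSum_volterraIter
    (hp : ContinuousOn p (uIcc a b)) (hr : ContinuousOn r (uIcc a b))
    (hg : ContinuousOn g (uIcc a b)) (hh : ContinuousOn h (uIcc a b))
    (hvc : ContinuousOn v (uIcc a b)) (hwc : ContinuousOn w (uIcc a b))
    (hv : ∀ x ∈ uIcc a b, v x = g x + ∫ t in a..x, p t * w t)
    (hw : ∀ x ∈ uIcc a b, w x = h x + ∫ t in a..x, r t * v t) :
    HasSum (fun k => volterraIter a p r g h k b) (v b) := by
  have exists_bound {u₁ u₂ : ℝ → 𝕜} (h₁ : ContinuousOn u₁ (uIcc a b))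
      (h₂ : ContinuousOn u₂ (uIcc a b)) :
      ∃ C : ℝ, (∀ t ∈ uIcc a b, ‖u₁ t‖ ≤ C) ∧ ∀ t ∈ uIcc a b, ‖u₂ t‖ ≤ C := by
    obtain ⟨C₁, hC₁⟩ := isCompact_uIcc.exists_bound_of_continuousOn h₁
    obtain ⟨C₂, hC₂⟩ := isCompact_uIcc.exists_bound_of_continuousOn h₂
    exact ⟨max C₁ C₂, fun t ht => (hC₁ t ht).trans (le_max_left _ _),
      fun t ht => (hC₂ t ht).trans (le_max_right _ _)⟩
  obtain ⟨M, hpM, hrM⟩ := exists_bound hp hr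
  have summable_norm {u₁ u₂ : ℝ → 𝕜} (h₁ : ContinuousOn u₁ (uIcc a b))
      (h₂ : ContinuousOn u₂ (uIcc a b)) :
      Summable fun n => ‖volterraIter a p r u₁ u₂ n b‖ := by
    obtain ⟨K, hK₁, hK₂⟩ := exists_bound h₁ h₂
    refine .of_nonneg_of_le (fun _ => norm_nonneg _) (fun n => ?_)
      ((Real.summable_pow_div_factorial (M * |b - a|)).mul_left K)
    refine (norm_volterraIter_le hpM hrM hK₁ hK₂ n right_mem_uIcc).trans_eq ?_
    rw [mul_pow]
    ring
  have hremainder : Tendsto (fun N => v b - volterraIter a p r v w N b) atTop (𝓝 (v b)) := by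
    simpa using (summable_norm hvc hwc).of_norm.tendsto_atTop_zero.const_sub (v b)
  refine ((summable_norm hg hh).of_norm.hasSum_iff_tendsto_nat).2 (hremainder.congr fun N => ?_)
  exact sub_eq_of_eq_add
    (eq_sum_volterraIter_add_volterraIter hp hr hg hh hvc hwc hv hw N right_mem_uIcc)

lemma volterraIter_const_mul (c : 𝕜) (n : ℕ) (x : ℝ) :
    volterraIter a (fun t => c * p t) (fun t => c * r t) g h n x =
      c ^ n * volterraIter a p r g h n x := by
  induction n generalizing p r g h x with
  | zero => simp [volterraIter]
  | succ n ih =>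
    simp only [volterraIter, ih, ← intervalIntegral.integral_const_mul]
    congr! 2 with t
    ring

end Volterra

section Liouville

variable {𝕜 : Type*} [RCLike 𝕜] {a b : ℝ}

lemma integral_eq_sub_of_hasDerivWithinAt_uIcc {F F' : ℝ → 𝕜}
    (hF : ∀ t ∈ uIcc a b, HasDerivWithinAt F (F' t) (uIcc a b) t)
    (hF' : ContinuousOn F' (uIcc a b)) : ∫ t in a..b, F' t = F b - F a :=
  intervalIntegral.integral_eq_sub_of_hasDeriv_right
    (fun t ht => (hF t ht).continuousWithinAt)
    (fun t ht => ((hF t (Ioo_subset_Icc_self ht)).hasDerivAt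
      (Icc_mem_nhds ht.1 ht.2)).hasDerivWithinAt) hF'.intervalIntegrable

/-- The Wronskian of `f` and `y`, where `f'` and `y'` stand for their derivatives. -/
def wronskian (f f' y y' : ℝ → 𝕜) (x : ℝ) : 𝕜 := f x * y' x - f' x * y x

variable {f f' y y' q : ℝ → 𝕜} {c : 𝕜} {s : Set ℝ} {x : ℝ}

lemma hasDerivWithinAt_wronskian (hf : HasDerivWithinAt f (f' x) s x)
    (hf' : HasDerivWithinAt f' (q x * f x) s x) (hy : HasDerivWithinAt y (y' x) s x)
    (hy' : HasDerivWithinAt y' (q x * y x + c * y x) s x) :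
    HasDerivWithinAt (wronskian f f' y y') (c * (f x * y x)) s x :=
  ((hf.mul hy').sub (hf'.mul hy)).congr_deriv (by ring)

lemma hasDerivWithinAt_div_wronskian (hf : HasDerivWithinAt f (f' x) s x)
    (hy : HasDerivWithinAt y (y' x) s x) (hfx : f x ≠ 0) :
    HasDerivWithinAt (fun t => y t / f t) ((f x ^ 2)⁻¹ * wronskian f f' y y' x) s x :=
  (hy.fun_div hf hfx).congr_deriv (by rw [wronskian, div_eq_inv_mul]; ring)

lemma wronskian_eq_add_integral
    (hf : ∀ t ∈ uIcc a b, HasDerivWithinAt f (f' t) (uIcc a b) t)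
    (hf' : ∀ t ∈ uIcc a b, HasDerivWithinAt f' (q t * f t) (uIcc a b) t)
    (hy : ∀ t ∈ uIcc a b, HasDerivWithinAt y (y' t) (uIcc a b) t)
    (hy' : ∀ t ∈ uIcc a b, HasDerivWithinAt y' (q t * y t + c * y t) (uIcc a b) t)
    (hx : x ∈ uIcc a b) :
    wronskian f f' y y' x = wronskian f f' y y' a + ∫ t in a..x, c * (f t * y t) := by
  have hsub : uIcc a x ⊆ uIcc a b := uIcc_subset_uIcc_left hx
  have hfy : ContinuousOn (fun t => f t * y t) (uIcc a x) := fun t ht =>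
    (((hf t (hsub ht)).mul (hy t (hsub ht))).mono hsub).continuousWithinAt
  rw [integral_eq_sub_of_hasDerivWithinAt_uIcc (fun t ht => (hasDerivWithinAt_wronskian
    (hf t (hsub ht)) (hf' t (hsub ht)) (hy t (hsub ht)) (hy' t (hsub ht))).mono hsub)
    (continuousOn_const.mul hfy), add_sub_cancel]

lemma div_eq_add_integral_wronskian
    (hf : ∀ t ∈ uIcc a b, HasDerivWithinAt f (f' t) (uIcc a b) t) (hfne : ∀ t ∈ uIcc a b, f t ≠ 0)
    (hy : ∀ t ∈ uIcc a b, HasDerivWithinAt y (y' t) (uIcc a b) t)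
    (hW : ContinuousOn (wronskian f f' y y') (uIcc a b)) (hx : x ∈ uIcc a b) :
    y x / f x = y a / f a + ∫ t in a..x, (f t ^ 2)⁻¹ * wronskian f f' y y' t := by
  have hsub : uIcc a x ⊆ uIcc a b := uIcc_subset_uIcc_left hx
  have hfinv : ContinuousOn (fun t => (f t ^ 2)⁻¹) (uIcc a b) :=
    .inv₀ (.pow (fun t ht => (hf t ht).continuousWithinAt) 2)
      fun t ht => pow_ne_zero 2 (hfne t ht)
  rw [integral_eq_sub_of_hasDerivWithinAt_uIcc (fun t ht => (hasDerivWithinAt_div_wronskian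
    (hf t (hsub ht)) (hy t (hsub ht)) (hfne t (hsub ht))).mono hsub)
    ((hfinv.mul hW).mono hsub), add_sub_cancel]

lemma hasSum_volterraIter_of_hasDerivWithinAt {μ : 𝕜}
    (hf : ∀ t ∈ uIcc a b, HasDerivWithinAt f (f' t) (uIcc a b) t)
    (hf' : ∀ t ∈ uIcc a b, HasDerivWithinAt f' (q t * f t) (uIcc a b) t)
    (hfne : ∀ t ∈ uIcc a b, f t ≠ 0)
    (hy : ∀ t ∈ uIcc a b, HasDerivWithinAt y (y' t) (uIcc a b) t)
    (hy' : ∀ t ∈ uIcc a b, HasDerivWithinAt y' (q t * y t + μ ^ 2 * y t) (uIcc a b) t)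
    (hya : y a = f a) (hy'a : y' a = f' a + μ / f a) :
    HasSum (fun k => μ ^ k * volterraIter a (fun t => (f t ^ 2)⁻¹) (fun t => f t ^ 2) 1 1 k b)
      (y b / f b) := by
  have hfa : f a ≠ 0 := hfne a left_mem_uIcc
  have hfc : ContinuousOn f (uIcc a b) := fun t ht => (hf t ht).continuousWithinAt
  have hyc : ContinuousOn y (uIcc a b) := fun t ht => (hy t ht).continuousWithinAt
  have hvc : ContinuousOn (fun t => y t / f t) (uIcc a b) := hyc.div hfc hfne
  have hWc : ContinuousOn (wronskian f f' y y') (uIcc a b) := fun t ht =>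
    (hasDerivWithinAt_wronskian (hf t ht) (hf' t ht) (hy t ht) (hy' t ht)).continuousWithinAt
  have hWa : wronskian f f' y y' a = μ := by
    rw [wronskian, hya, hy'a]
    field_simp
    ring
  have hp : ContinuousOn (fun t => μ * (f t ^ 2)⁻¹) (uIcc a b) :=
    continuousOn_const.mul ((hfc.pow 2).inv₀ fun t ht => pow_ne_zero 2 (hfne t ht))
  have hr : ContinuousOn (fun t => μ * f t ^ 2) (uIcc a b) := continuousOn_const.mul (hfc.pow 2)
  -- `w` is the Wronskian divided by `μ`, written so as to make sense for `μ = 0` as well.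
  let w : ℝ → 𝕜 := fun x => 1 + ∫ t in a..x, μ * f t ^ 2 * (y t / f t)
  have hwc : ContinuousOn w (uIcc a b) :=
    continuousOn_const.add (continuousOn_intervalPrimitive (hr.mul hvc))
  have hWw {x : ℝ} (hx : x ∈ uIcc a b) : wronskian f f' y y' x = μ * w x := by
    rw [wronskian_eq_add_integral hf hf' hy hy' hx, hWa, mul_add, mul_one,
      ← intervalIntegral.integral_const_mul]
    refine congrArg (μ + ·) (intervalIntegral.integral_congr fun t ht => ?_)
    have := hfne t (uIcc_subset_uIcc_left hx ht)
    field_simp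
  have hvw (x : ℝ) (hx : x ∈ uIcc a b) :
      y x / f x = 1 + ∫ t in a..x, μ * (f t ^ 2)⁻¹ * w t := by
    rw [div_eq_add_integral_wronskian hf hfne hy hWc hx, hya, div_self hfa]
    refine congrArg (1 + ·) (intervalIntegral.integral_congr fun t ht => ?_)
    simp only [hWw (uIcc_subset_uIcc_left hx ht)]
    ring
  simpa only [volterraIter_const_mul] using hasSum_volterraIter hp hr
    (g := 1) (h := 1) continuousOn_const continuousOn_const hvc hwc hvw (fun x _ => rfl)

end Liouville

section FormalPowers

variable (f : ℝ → ℂ)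

lemma formalX_eq_factorial_mul_volterraIter (n : ℕ) (x : ℝ) :
    formalX f n x = n.factorial * volterraIter 0 (fun t => (f t ^ 2) ^ ((-1 : ℤ) ^ n))
      (fun t => (f t ^ 2) ^ ((-1 : ℤ) ^ (n + 1))) 1 1 n x := by
  induction n generalizing x with
  | zero => simp [formalX, volterraIter]
  | succ n ih =>
    simp only [formalX, volterraIter, ih, pow_succ _ (n + 1), pow_succ _ n, Nat.factorial_succ,
      mul_neg_one, neg_neg, Nat.cast_mul, Nat.cast_succ, mul_assoc,
      intervalIntegral.integral_const_mul]
    congr! 4 with t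
    exact mul_comm _ _

lemma formalXt_eq_factorial_mul_volterraIter (n : ℕ) (x : ℝ) :
    formalXt f n x = n.factorial * volterraIter 0 (fun t => (f t ^ 2) ^ ((-1 : ℤ) ^ (n + 1)))
      (fun t => (f t ^ 2) ^ ((-1 : ℤ) ^ n)) 1 1 n x := by
  induction n generalizing x with
  | zero => simp [formalXt, volterraIter]
  | succ n ih =>
    simp only [formalXt, volterraIter, ih, pow_succ _ (n + 1), pow_succ _ n, Nat.factorial_succ,
      mul_neg_one, neg_neg, Nat.cast_mul, Nat.cast_succ, mul_assoc,
      intervalIntegral.integral_const_mul]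
    congr! 4 with t
    exact mul_comm _ _

lemma formalPower_eq_factorial_mul_volterraIter (k : ℕ) (x : ℝ) :
    formalPower f k x = k.factorial *
      (f x * volterraIter 0 (fun t => (f t ^ 2)⁻¹) (fun t => f t ^ 2) 1 1 k x) := by
  rw [formalPower, formalX_eq_factorial_mul_volterraIter, formalXt_eq_factorial_mul_volterraIter]
  split_ifs with hk
  · simp only [pow_succ, hk.neg_one_pow, zpow_neg_one, neg_mul_neg, mul_one, zpow_one]
    ring
  · simp only [pow_succ, (Nat.not_odd_iff_even.1 hk).neg_one_pow, one_mul, zpow_neg_one, zpow_one]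
    ring

variable {f}

theorem hasSum_formalPower {s : Set ℝ} [s.OrdConnected] (hs : 0 ∈ s) {f' y y' q : ℝ → ℂ} {μ : ℂ}
    (hf : ∀ x ∈ s, HasDerivWithinAt f (f' x) s x)
    (hf' : ∀ x ∈ s, HasDerivWithinAt f' (q x * f x) s x) (hfne : ∀ x ∈ s, f x ≠ 0)
    (hy : ∀ x ∈ s, HasDerivWithinAt y (y' x) s x)
    (hy' : ∀ x ∈ s, HasDerivWithinAt y' (q x * y x + μ ^ 2 * y x) s x)
    (hy0 : y 0 = f 0) (hy'0 : y' 0 = f' 0 + μ / f 0) {x : ℝ} (hx : x ∈ s) :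
    HasSum (fun k => μ ^ k / k.factorial * formalPower f k x) (y x) := by
  have hsub : uIcc 0 x ⊆ s := OrdConnected.uIcc_subset ‹_› hs hx
  have hsum := hasSum_volterraIter_of_hasDerivWithinAt
    (fun t ht => (hf t (hsub ht)).mono hsub) (fun t ht => (hf' t (hsub ht)).mono hsub)
    (fun t ht => hfne t (hsub ht)) (fun t ht => (hy t (hsub ht)).mono hsub)
    (fun t ht => (hy' t (hsub ht)).mono hsub) hy0 hy'0
  rw [← mul_div_cancel₀ (y x) (hfne x hx)]
  refine (hsum.mul_left (f x)).congr_fun fun k => ?_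
  have hfac : (k.factorial : ℂ) ≠ 0 := mod_cast k.factorial_ne_zero
  rw [formalPower_eq_factorial_mul_volterraIter]
  field_simp

end FormalPowers

section Hermite

open Polynomial

lemma hermitePhys_succ (n : ℕ) :
    hermitePhys (n + 1) = 2 * X * hermitePhys n - derivative (hermitePhys n) := rfl

lemma derivative_hermitePhys_succ (n : ℕ) :
    derivative (hermitePhys (n + 1)) = 2 * (n + 1) * hermitePhys n := by
  induction n with
  | zero => simp [hermitePhys]
  | succ n ih =>
    rw [hermitePhys_succ (n + 1), ih]
    simp only [derivative_sub, derivative_mul, derivative_add, derivative_natCast, derivative_one,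
      derivative_ofNat, derivative_X, ih]
    rw [hermitePhys_succ n]
    push_cast
    ring

lemma succ_mul_coeff_succ_hermitePhys_succ (n k : ℕ) :
    (k + 1) * (hermitePhys (n + 1)).coeff (k + 1) = 2 * (n + 1) * (hermitePhys n).coeff k := by
  have h := congrArg (coeff · k) (derivative_hermitePhys_succ n)
  have hC : (2 * (n + 1) : ℝ[X]) = C (2 * (n + 1) : ℝ) := by
    simp only [map_mul, map_add, map_natCast, map_one, map_ofNat]
  rw [hC, coeff_C_mul, coeff_derivative] at h
  rw [← h, mul_comm]

lemma coeff_hermitePhys_add (k j : ℕ) :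
    (hermitePhys (k + j)).coeff k = (k + j).choose k * 2 ^ k * (hermitePhys j).coeff 0 := by
  induction k with
  | zero => simp
  | succ k ih =>
    have hchoose : ((k + j + 1 : ℝ) * (k + j).choose k) = (k + j + 1).choose (k + 1) * (k + 1) :=
      mod_cast Nat.add_one_mul_choose_eq (k + j) k
    have hcoeff := succ_mul_coeff_succ_hermitePhys_succ (k + j) k
    rw [ih] at hcoeff
    push_cast at hcoeff
    rw [add_right_comm k 1 j]
    refine mul_left_cancel₀ (Nat.cast_add_one_ne_zero k : (k + 1 : ℝ) ≠ 0) (hcoeff.trans ?_)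
    linear_combination 2 ^ (k + 1) * (hermitePhys j).coeff 0 * hchoose

lemma coeff_zero_hermitePhys_add_two (n : ℕ) :
    (hermitePhys (n + 2)).coeff 0 = -(2 * (n + 1)) * (hermitePhys n).coeff 0 := by
  have h := succ_mul_coeff_succ_hermitePhys_succ n 0
  rw [hermitePhys_succ, coeff_sub, coeff_derivative, mul_assoc, coeff_ofNat_mul, mul_coeff_zero]
  simp only [CharP.cast_eq_zero, zero_add, one_mul, coeff_X_zero, zero_mul, mul_zero, mul_one,
    zero_sub, neg_mul, neg_inj] at h ⊢
  linarith

lemma coeff_zero_hermitePhys_two_mul (m : ℕ) :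
    (hermitePhys (2 * m)).coeff 0 / (2 * m).factorial = (-1) ^ m / m.factorial := by
  induction m with
  | zero => simp [hermitePhys]
  | succ m ih =>
    rw [div_eq_iff (by positivity)] at ih
    rw [mul_add, mul_one, coeff_zero_hermitePhys_add_two, ih]
    simp only [Nat.factorial_succ]
    push_cast
    field_simp
    ring

lemma coeff_zero_hermitePhys_two_mul_add_one (m : ℕ) :
    (hermitePhys (2 * m + 1)).coeff 0 = 0 := by
  induction m with
  | zero => simp [hermitePhys]
  | succ m ih => rw [mul_add, add_right_comm, coeff_zero_hermitePhys_add_two, ih, mul_zero]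

lemma hasSum_pow_div_factorial (z : ℂ) : HasSum (fun n : ℕ => z ^ n / n.factorial) (exp z) := by
  rw [exp_eq_exp_ℂ]
  exact NormedSpace.expSeries_div_hasSum_exp z

lemma hasSum_coeff_zero_hermitePhys (t : ℂ) :
    HasSum (fun j => ((hermitePhys j).coeff 0 : ℂ) * t ^ j / j.factorial) (exp (-t ^ 2)) := by
  have heven (m : ℕ) : ((hermitePhys (2 * m)).coeff 0 : ℂ) * t ^ (2 * m) / (2 * m).factorial =
      (-t ^ 2) ^ m / m.factorial := by
    have h : ((hermitePhys (2 * m)).coeff 0 : ℂ) / (2 * m).factorial = (-1) ^ m / m.factorial :=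
      mod_cast congrArg ((↑) : ℝ → ℂ) (coeff_zero_hermitePhys_two_mul m)
    rw [mul_div_right_comm, h, neg_pow, pow_mul]
    ring
  rw [← add_zero (exp _)]
  refine .even_add_odd ?_ ?_
  · simpa only [heven] using hasSum_pow_div_factorial (-t ^ 2)
  · simpa only [coeff_zero_hermitePhys_two_mul_add_one, ofReal_zero, zero_mul, zero_div]
      using hasSum_zero

lemma hasSum_sum_coeff_hermitePhys {α : ℕ → ℂ} {μ A : ℂ}
    (hα : HasSum (fun k => μ ^ k / k.factorial * α k) A) :
    HasSum (fun n => μ ^ n / (n.factorial * 2 ^ n) *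
        ∑ k ∈ Finset.range (n + 1), ((hermitePhys n).coeff k : ℂ) * α k)
      (A * exp (-(μ / 2) ^ 2)) := by
  have hH := hasSum_coeff_zero_hermitePhys (μ / 2)
  have hprod := hasSum_sum_range_mul_of_summable_norm hα.summable.norm hH.summable.norm
  rw [hα.tsum_eq, hH.tsum_eq] at hprod
  refine hprod.congr_fun fun n => ?_
  rw [Finset.mul_sum]
  refine Finset.sum_congr rfl fun k hk => ?_
  obtain ⟨j, rfl⟩ := Nat.exists_eq_add_of_le (Finset.mem_range_succ_iff.1 hk)
  have hfac : ((k + j).factorial : ℂ) ≠ 0 := mod_cast (k + j).factorial_ne_zero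
  rw [coeff_hermitePhys_add, Nat.add_sub_cancel_left]
  push_cast [Nat.cast_add_choose ℂ, div_pow, pow_add]
  field_simp

end Hermite

theorem solution_hermite_representation_general {s : Set ℝ} [s.OrdConnected] (hs : 0 ∈ s)
    {f f' y y' q : ℝ → ℂ} {ω : ℂ}
    (hf : ∀ x ∈ s, HasDerivWithinAt f (f' x) s x)
    (hf' : ∀ x ∈ s, HasDerivWithinAt f' (q x * f x) s x) (hfne : ∀ x ∈ s, f x ≠ 0)
    (hy : ∀ x ∈ s, HasDerivWithinAt y (y' x) s x)
    (hy' : ∀ x ∈ s, HasDerivWithinAt y' (q x * y x - ω ^ 2 * y x) s x)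
    (hy0 : y 0 = f 0) (hy'0 : y' 0 = f' 0 + I * ω / f 0) {x : ℝ} (hx : x ∈ s) :
    ∃ S : ℂ, HasSum (fun n => cCoef f n x * (I * ω) ^ n) S ∧
      y x = exp (I * ω * x) + (Real.sqrt Real.pi : ℂ) * exp (-ω ^ 2 / 4) * S := by
  have hsq : (I * ω) ^ 2 = -ω ^ 2 := by rw [mul_pow, I_sq, neg_one_mul]
  have hφ := hasSum_formalPower hs hf hf' hfne hy (by simpa [hsq, ← sub_eq_add_neg] using hy')
    hy0 hy'0 hx
  have hdiff : HasSum (fun k => (I * ω) ^ k / k.factorial * (formalPower f k x - (x : ℂ) ^ k))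
      (y x - exp (I * ω * x)) :=
    (hφ.sub (hasSum_pow_div_factorial (I * ω * x))).congr_fun fun k => by rw [mul_pow]; ring
  have hpi : (Real.sqrt Real.pi : ℂ) ≠ 0 := mod_cast (Real.sqrt_pos.2 Real.pi_pos).ne'
  have hexp : exp (-ω ^ 2 / 4) * exp (-(I * ω / 2) ^ 2) = 1 := by
    rw [← exp_add, div_pow, hsq, exp_eq_one_iff]
    exact ⟨0, by ring⟩
  refine ⟨_, ((hasSum_sum_coeff_hermitePhys hdiff).mul_left
    (Real.sqrt Real.pi : ℂ)⁻¹).congr_fun fun n => ?_, ?_⟩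
  · rw [cCoef]
    field_simp
  · calc
      y x = exp (I * ω * x) + (Real.sqrt Real.pi * (Real.sqrt Real.pi : ℂ)⁻¹) *
          ((exp (-ω ^ 2 / 4) * exp (-(I * ω / 2) ^ 2)) * (y x - exp (I * ω * x))) := by
        rw [mul_inv_cancel₀ hpi, hexp, one_mul, one_mul, add_sub_cancel]
      _ = _ := by ring

/-- Fourier–Hermite representation of the solution for real ω. -/
theorem solution_hermite_representation
    (b : ℝ) (hb : 0 < b) (q : ℝ → ℂ) (hq : ContinuousOn q (Set.Icc (-b) b))
    (f f' : ℝ → ℂ)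
    (hf : ∀ x ∈ Set.Icc (-b) b, HasDerivAt f (f' x) x)
    (hf' : ∀ x ∈ Set.Icc (-b) b, HasDerivAt f' (q x * f x) x)
    (hf0 : f 0 = 1) (hf'0 : f' 0 = 0)
    (hfne : ∀ x ∈ Set.Icc (-b) b, f x ≠ 0)
    (ω : ℝ) (y y' : ℝ → ℂ)
    (hy : ∀ x ∈ Set.Icc (-b) b, HasDerivAt y (y' x) x)
    (hy' : ∀ x ∈ Set.Icc (-b) b, HasDerivAt y' (q x * y x - (ω : ℂ) ^ 2 * y x) x)
    (hy0 : y 0 = 1) (hy'0 : y' 0 = Complex.I * ω) :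
    ∀ x ∈ Set.Icc (-b) b, ∃ S : ℂ,
      Tendsto (fun N : ℕ => ∑ n ∈ Finset.range N, cCoef f n x * (Complex.I * ω) ^ n)
        atTop (𝓝 S) ∧
      y x = Complex.exp (Complex.I * ω * x) +
        (Real.sqrt Real.pi : ℂ) * Complex.exp (-(ω : ℂ) ^ 2 / 4) * S := by
  have h0 : (0 : ℝ) ∈ Set.Icc (-b) b := ⟨neg_nonpos.2 hb.le, hb.le⟩
  intro x hx
  obtain ⟨S, hS, hyx⟩ := solution_hermite_representation_general h0
    (fun x hx => (hf x hx).hasDerivWithinAt) (fun x hx => (hf' x hx).hasDerivWithinAt) hfne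
    (fun x hx => (hy x hx).hasDerivWithinAt) (fun x hx => (hy' x hx).hasDerivWithinAt)
    (hy0.trans hf0.symm) (by simp [hf0, hf'0, hy'0]) hx
  exact ⟨S, hS.tendsto_sum_nat, hyx⟩

end
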